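/- arXiv:1712.03937 — 2 statements merged into one kernel-verified Lean document; each statement's English description precedes it below -/
import Mathlib

section
/- Let K and H be convex bodies in ℝ^d such that L_K(s) = L_H(s) for all real s > 0. Then the Lebesgue volume of the pseudopyramid of K equals the Lebesgue volume of the pseudopyramid of H, i.e. vol(ppyr K) = vol(ppyr H). -/
open Set MeasureTheory
open scoped Pointwise

/-- The set of integer lattice points in `ℝ^d`. -/
def latticePts (d : ℕ) : Set (EuclideanSpace ℝ (Fin d)) :=
  {x | ∀ i, ∃ n : ℤ, x i = (n : ℝ)}

/-- The real Ehrhart function `L_K(s) = #(sK ∩ ℤ^d)`. -/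
noncomputable def ehrhart (d : ℕ) (K : Set (EuclideanSpace ℝ (Fin d))) (s : ℝ) : ℕ :=
  (s • K ∩ latticePts d).ncard

/-- The pseudopyramid of `K`: the union of the dilates `λK` for `λ ∈ [0, 1]`. -/
def ppyr (d : ℕ) (K : Set (EuclideanSpace ℝ (Fin d))) : Set (EuclideanSpace ℝ (Fin d)) :=
  ⋃ l ∈ Set.Icc (0 : ℝ) 1, l • K

open Filter Topology Module

/-!
For `x ∈ ℝ^d` and convex `K`, the `s ≥ 0` with `x ∈ sK` form an interval. Among the lattice points,
those of `s • ppyr K` are the ones whose interval starts no later than `s`; those of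
`s • ppyr K \ sK` are the ones whose interval has also ended before `s`. As `K` is compact, the
number of the former is right-continuous in `s`, and the number of the latter is left-continuous.

If `L_K = L_H`, then `L_{ppyr K} - L_{ppyr H}` is right-continuous and agrees with the
left-continuous `(L_{ppyr K} - L_K) - (L_{ppyr H} - L_H)`. Being integer valued and continuous, it
is a constant, which disappears in the limit `L_A(n) / n ^ d → vol A` once `d ≠ 0`.
-/

lemma eventually_eq_of_subset_finite {ι α : Type*} {l : Filter ι} {A : ι → Set α} {B F : Set α}
    (hF : F.Finite) (hA : ∀ᶠ i in l, A i ⊆ F) (hB : B ⊆ F)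
    (h : ∀ x ∈ F, ∀ᶠ i in l, x ∈ A i ↔ x ∈ B) : ∀ᶠ i in l, A i = B := by
  filter_upwards [hA, (eventually_all_finite hF).2 h] with i hAF hi
  ext x
  exact ⟨fun hx => (hi x (hAF hx)).1 hx, fun hx => (hi x (hB hx)).2 hx⟩

lemma eventually_notMem_smul_of_isClosed {G₀ X : Type*} [GroupWithZero G₀] [TopologicalSpace G₀]
    [T1Space G₀] [ContinuousInv₀ G₀] [TopologicalSpace X] [MulAction G₀ X] [ContinuousSMul G₀ X]
    {A : Set X} (hA : IsClosed A) {t : G₀} (ht : t ≠ 0) {x : X} (hx : x ∉ t • A) :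
    ∀ᶠ s in 𝓝 t, x ∉ s • A := by
  rw [mem_smul_set_iff_inv_smul_mem₀ ht] at hx
  have hcont : ContinuousAt (fun s : G₀ => s⁻¹ • x) t :=
    (continuousAt_inv₀ ht).smul continuousAt_const
  filter_upwards [hcont.eventually_mem (hA.isOpen_compl.mem_nhds hx), eventually_ne_nhds ht]
    with s hs hs0
  rwa [mem_smul_set_iff_inv_smul_mem₀ hs0]

lemma convex_setOf_nonneg_mem_smul {𝕜 E : Type*} [Field 𝕜] [LinearOrder 𝕜]
    [IsStrictOrderedRing 𝕜] [AddCommGroup E] [Module 𝕜 E] {K : Set E} (hK : Convex 𝕜 K) (x : E) :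
    Convex 𝕜 {s : 𝕜 | 0 ≤ s ∧ x ∈ s • K} := by
  rintro r ⟨hr, hxr⟩ t ⟨ht, hxt⟩ a b ha hb hab
  refine ⟨by positivity, ?_⟩
  rw [smul_eq_mul, smul_eq_mul, hK.add_smul (by positivity) (by positivity), mul_smul, mul_smul,
    ← Convex.combo_self hab x]
  exact add_mem_add (smul_mem_smul_set hxr) (smul_mem_smul_set hxt)

section Lattice

lemma covolume_span_orthonormalBasis {ι E : Type*} [Fintype ι] [NormedAddCommGroup E]
    [InnerProductSpace ℝ E] [FiniteDimensional ℝ E] [MeasurableSpace E] [BorelSpace E]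
    (b : OrthonormalBasis ι ℝ E) :
    ZLattice.covolume (Submodule.span ℤ (range b.toBasis)) = 1 := by
  rw [ZLattice.covolume_eq_measure_fundamentalDomain _ _
      (ZSpan.isAddFundamentalDomain b.toBasis volume),
    measureReal_congr (ZSpan.fundamentalDomain_ae_parallelepiped b.toBasis volume),
    OrthonormalBasis.coe_toBasis, measureReal_def, b.volume_parallelepiped, ENNReal.toReal_one]

variable {d : ℕ} {A : Set (EuclideanSpace ℝ (Fin d))}

lemma latticePts_eq_span_basisFun (d : ℕ) :
    latticePts d = Submodule.span ℤ (range (EuclideanSpace.basisFun (Fin d) ℝ).toBasis) := by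
  ext x
  rw [SetLike.mem_coe, Basis.mem_span_iff_repr_mem]
  simp [latticePts, eq_comm]

lemma finite_inter_latticePts (hA : Bornology.IsBounded A) : (A ∩ latticePts d).Finite := by
  rw [latticePts_eq_span_basisFun]
  exact ZSpan.setFinite_inter _ hA

lemma ehrhart_eq_natCard_inter_inv_smul {s : ℝ} (hs : s ≠ 0) :
    ehrhart d A s = Nat.card (A ∩ s⁻¹ • latticePts d : Set (EuclideanSpace ℝ (Fin d))) := by
  rw [← Set.natCard_smul_set₀ hs, smul_set_inter₀ hs, smul_inv_smul₀ hs, Nat.card_coe_set_eq,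
    ehrhart]

lemma tendsto_ehrhart_div_pow (hA : Bornology.IsBounded A) (hAm : MeasurableSet A)
    (hAf : volume (frontier A) = 0) :
    Tendsto (fun n : ℕ => (ehrhart d A n : ℝ) / n ^ d) atTop (𝓝 (volume.real A)) := by
  have hlim := ZLattice.covolume.tendsto_card_div_pow'
    (Submodule.span ℤ (range (EuclideanSpace.basisFun (Fin d) ℝ).toBasis)) hA hAm hAf
  rw [covolume_span_orthonormalBasis, div_one, ← latticePts_eq_span_basisFun,
    finrank_euclideanSpace_fin] at hlim
  refine hlim.congr' ?_
  filter_upwards [eventually_ne_atTop 0] with n hn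
  rw [ehrhart_eq_natCard_inter_inv_smul (Nat.cast_ne_zero.2 hn)]

lemma volume_real_eq_of_ehrhart_sub_eq {B : Set (EuclideanSpace ℝ (Fin d))} {c : ℤ} (hd : d ≠ 0)
    (hA : Bornology.IsBounded A) (hAm : MeasurableSet A) (hAf : volume (frontier A) = 0)
    (hB : Bornology.IsBounded B) (hBm : MeasurableSet B) (hBf : volume (frontier B) = 0)
    (h : ∀ᶠ n : ℕ in atTop, (ehrhart d A n : ℤ) - ehrhart d B n = c) :
    volume.real A = volume.real B := by
  have hsub := (tendsto_ehrhart_div_pow hA hAm hAf).sub (tendsto_ehrhart_div_pow hB hBm hBf)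
  have hconst : Tendsto (fun n : ℕ => (c : ℝ) / n ^ d) atTop (𝓝 0) :=
    ((tendsto_pow_atTop hd).comp tendsto_natCast_atTop_atTop).const_div_atTop (c : ℝ)
  refine sub_eq_zero.1 (tendsto_nhds_unique hsub (hconst.congr' ?_))
  filter_upwards [h] with n hn
  rw [← sub_div, ← hn, Int.cast_sub, Int.cast_natCast, Int.cast_natCast]

lemma eq_of_ehrhart_zero_dim_eq {A B : Set (EuclideanSpace ℝ (Fin 0))}
    (h : ehrhart 0 A 1 = ehrhart 0 B 1) : A = B := by
  have hcard : A.ncard = B.ncard := by simpa [ehrhart, latticePts] using h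
  have h_cases (C : Set (EuclideanSpace ℝ (Fin 0))) : C = ∅ ∨ C = univ :=
    Subsingleton.set_cases (.inl rfl) (.inr rfl) C
  rcases h_cases A with rfl | rfl <;> rcases h_cases B with rfl | rfl <;> simp_all

end Lattice

section Pseudopyramid

variable {d : ℕ} {K H : Set (EuclideanSpace ℝ (Fin d))} {s t : ℝ}

lemma ppyr_eq_Icc_smul (d : ℕ) (K : Set (EuclideanSpace ℝ (Fin d))) :
    ppyr d K = Icc (0 : ℝ) 1 • K :=
  iUnion_smul_set _ _

lemma smul_ppyr (hs : 0 < s) : s • ppyr d K = Icc 0 s • K := by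
  rw [ppyr_eq_Icc_smul, ← smul_assoc, LinearOrderedField.smul_Icc hs, mul_zero, mul_one]

lemma mem_smul_ppyr (hs : 0 < s) {x : EuclideanSpace ℝ (Fin d)} :
    x ∈ s • ppyr d K ↔ ∃ r ∈ Icc 0 s, x ∈ r • K := by
  rw [smul_ppyr hs, ← iUnion_smul_set]
  simp only [mem_iUnion, exists_prop]

lemma smul_ppyr_subset_smul_ppyr (hs : 0 < s) (hst : s ≤ t) : s • ppyr d K ⊆ t • ppyr d K := by
  rw [smul_ppyr hs, smul_ppyr (hs.trans_le hst)]
  exact smul_subset_smul_right (Icc_subset_Icc_right hst)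

lemma subset_ppyr : K ⊆ ppyr d K := fun x hx =>
  mem_iUnion₂.2 ⟨1, right_mem_Icc.2 zero_le_one, by rwa [one_smul]⟩

lemma isCompact_ppyr (hK : IsCompact K) : IsCompact (ppyr d K) := by
  rw [ppyr_eq_Icc_smul]
  exact isCompact_Icc.smul_set hK

lemma convex_ppyr (hK : Convex ℝ K) : Convex ℝ (ppyr d K) := by
  simp only [Convex, StarConvex, ppyr, mem_iUnion, exists_prop]
  rintro x ⟨p, hp, hx⟩ y ⟨q, hq, hy⟩ a b ha hb hab
  refine ⟨a * p + b * q, convex_Icc 0 1 hp hq ha hb hab, ?_⟩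
  rw [hK.add_smul (mul_nonneg ha hp.1) (mul_nonneg hb hq.1), mul_smul, mul_smul]
  exact add_mem_add (smul_mem_smul_set hx) (smul_mem_smul_set hy)

lemma eventually_mem_smul_ppyr_iff (hK : IsCompact K) (ht : 0 < t)
    (x : EuclideanSpace ℝ (Fin d)) :
    ∀ᶠ s in 𝓝[>] t, x ∈ s • ppyr d K ↔ x ∈ t • ppyr d K := by
  by_cases hx : x ∈ t • ppyr d K
  · filter_upwards [self_mem_nhdsWithin] with s hts
    exact iff_of_true (smul_ppyr_subset_smul_ppyr ht (le_of_lt hts) hx) hx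
  · filter_upwards [nhdsWithin_le_nhds
      (eventually_notMem_smul_of_isClosed (isCompact_ppyr hK).isClosed ht.ne' hx)] with s hs
    exact iff_of_false hs hx

lemma smul_ppyr_sdiff_smul_subset (hK : Convex ℝ K) (hs : 0 < s) (hst : s ≤ t) :
    s • ppyr d K \ s • K ⊆ t • ppyr d K \ t • K := by
  rintro x ⟨hxP, hxK⟩
  refine ⟨smul_ppyr_subset_smul_ppyr hs hst hxP, fun hxt => hxK ?_⟩
  obtain ⟨r, ⟨hr0, hrs⟩, hxr⟩ := (mem_smul_ppyr hs).1 hxP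
  exact ((convex_setOf_nonneg_mem_smul hK x).ordConnected.out
    ⟨hr0, hxr⟩ ⟨(hs.trans_le hst).le, hxt⟩ ⟨hrs, hst⟩).2

lemma eventually_mem_smul_ppyr_sdiff_smul_iff (hKc : IsClosed K) (hKconv : Convex ℝ K)
    (ht : 0 < t) (x : EuclideanSpace ℝ (Fin d)) :
    ∀ᶠ s in 𝓝[<] t, x ∈ s • ppyr d K \ s • K ↔ x ∈ t • ppyr d K \ t • K := by
  have hpos : ∀ᶠ s in 𝓝[<] t, 0 < s := nhdsWithin_le_nhds (lt_mem_nhds ht)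
  by_cases hx : x ∈ t • ppyr d K \ t • K
  · obtain ⟨r, ⟨hr0, hrt⟩, hxr⟩ := (mem_smul_ppyr ht).1 hx.1
    have hlt : r < t := hrt.lt_of_ne fun hr_eq => hx.2 (hr_eq ▸ hxr)
    filter_upwards [hpos, nhdsWithin_le_nhds (lt_mem_nhds hlt),
      nhdsWithin_le_nhds (eventually_notMem_smul_of_isClosed hKc ht.ne' hx.2)] with s hs hrs hxs
    exact iff_of_true ⟨(mem_smul_ppyr hs).2 ⟨r, ⟨hr0, hrs.le⟩, hxr⟩, hxs⟩ hx
  · filter_upwards [hpos, self_mem_nhdsWithin] with s hs hst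
    exact iff_of_false (fun hxs => hx (smul_ppyr_sdiff_smul_subset hKconv hs (le_of_lt hst) hxs)) hx

lemma finite_smul_ppyr_inter_latticePts (hK : IsCompact K) (s : ℝ) :
    (s • ppyr d K ∩ latticePts d).Finite :=
  finite_inter_latticePts ((isCompact_ppyr hK).smul s).isBounded

lemma ehrhart_ppyr_sub_ehrhart (hK : IsCompact K) (s : ℝ) :
    (ehrhart d (ppyr d K) s : ℤ) - ehrhart d K s =
      ((s • ppyr d K \ s • K) ∩ latticePts d).ncard := by
  have hsub : s • K ∩ latticePts d ⊆ s • ppyr d K ∩ latticePts d :=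
    inter_subset_inter_left _ (smul_set_mono subset_ppyr)
  have hfin := finite_smul_ppyr_inter_latticePts hK s
  rw [ehrhart, ehrhart, sub_eq_iff_eq_add, inter_sdiff_distrib_right,
    ← ncard_sdiff_add_ncard_of_subset hsub hfin, Nat.cast_add]

lemma continuousWithinAt_Ioi_ehrhart_ppyr (hK : IsCompact K) (ht : 0 < t) :
    ContinuousWithinAt (fun s => (ehrhart d (ppyr d K) s : ℤ)) (Ioi t) t := by
  have hsub : ∀ᶠ s in 𝓝[>] t,
      s • ppyr d K ∩ latticePts d ⊆ (t + 1) • ppyr d K ∩ latticePts d := by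
    filter_upwards [self_mem_nhdsWithin, nhdsWithin_le_nhds (gt_mem_nhds (lt_add_one t))]
      with s hts hst
    exact inter_subset_inter_left _ (smul_ppyr_subset_smul_ppyr (ht.trans hts) hst.le)
  refine tendsto_const_nhds.congr' ?_
  filter_upwards [eventually_eq_of_subset_finite
    (finite_smul_ppyr_inter_latticePts hK (t + 1)) hsub
    (inter_subset_inter_left _ (smul_ppyr_subset_smul_ppyr ht (lt_add_one t).le))
    fun x _ => (eventually_mem_smul_ppyr_iff hK ht x).mono fun s hs => and_congr_left' hs]
    with s hs
  rw [ehrhart, ehrhart, hs]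

lemma continuousWithinAt_Iio_ehrhart_ppyr_sub_ehrhart (hKc : IsCompact K) (hKconv : Convex ℝ K)
    (ht : 0 < t) :
    ContinuousWithinAt (fun s => (ehrhart d (ppyr d K) s : ℤ) - ehrhart d K s) (Iio t) t := by
  have hpos : ∀ᶠ s in 𝓝[<] t, 0 < s := nhdsWithin_le_nhds (lt_mem_nhds ht)
  have hsub : ∀ᶠ s in 𝓝[<] t,
      (s • ppyr d K \ s • K) ∩ latticePts d ⊆ t • ppyr d K ∩ latticePts d := by
    filter_upwards [hpos, self_mem_nhdsWithin] with s hs hst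
    exact inter_subset_inter_left _
      (sdiff_subset.trans (smul_ppyr_subset_smul_ppyr hs (le_of_lt hst)))
  refine tendsto_const_nhds.congr' ?_
  filter_upwards [eventually_eq_of_subset_finite
    (finite_smul_ppyr_inter_latticePts hKc t) hsub (inter_subset_inter_left _ sdiff_subset)
    fun x _ => (eventually_mem_smul_ppyr_sdiff_smul_iff hKc.isClosed hKconv ht x).mono
      fun s hs => and_congr_left' hs] with s hst
  rw [ehrhart_ppyr_sub_ehrhart hKc, ehrhart_ppyr_sub_ehrhart hKc, hst]

lemma continuousOn_ehrhart_ppyr_sub_ehrhart_ppyr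
    (hKc : IsCompact K) (hKconv : Convex ℝ K) (hHc : IsCompact H) (hHconv : Convex ℝ H)
    (h : ∀ s : ℝ, 0 < s → ehrhart d K s = ehrhart d H s) :
    ContinuousOn (fun s => (ehrhart d (ppyr d K) s : ℤ) - ehrhart d (ppyr d H) s) (Ioi 0) := by
  intro t (ht : 0 < t)
  refine (continuousAt_iff_continuous_left'_right'.2 ⟨?_, ?_⟩).continuousWithinAt
  · have hpos : ∀ᶠ s in 𝓝[<] t, 0 < s := nhdsWithin_le_nhds (lt_mem_nhds ht)
    refine ((continuousWithinAt_Iio_ehrhart_ppyr_sub_ehrhart hKc hKconv ht).sub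
      (continuousWithinAt_Iio_ehrhart_ppyr_sub_ehrhart hHc hHconv ht)).congr_of_eventuallyEq
      ?_ (by simp [h t ht])
    filter_upwards [hpos] with s hs
    simp [h s hs]
  · exact (continuousWithinAt_Ioi_ehrhart_ppyr hKc ht).sub
      (continuousWithinAt_Ioi_ehrhart_ppyr hHc ht)

theorem volume_ppyr_eq_of_ehrhart_eq_general
    (hKc : IsCompact K) (hKconv : Convex ℝ K) (hHc : IsCompact H) (hHconv : Convex ℝ H)
    (h : ∀ s : ℝ, 0 < s → ehrhart d K s = ehrhart d H s) :
    volume (ppyr d K) = volume (ppyr d H) := by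
  rcases eq_or_ne d 0 with rfl | hd
  · rw [eq_of_ehrhart_zero_dim_eq (h 1 one_pos)]
  have hcont := continuousOn_ehrhart_ppyr_sub_ehrhart_ppyr hKc hKconv hHc hHconv h
  have hconst : ∀ᶠ n : ℕ in atTop, (ehrhart d (ppyr d K) n : ℤ) - ehrhart d (ppyr d H) n =
      ehrhart d (ppyr d K) 1 - ehrhart d (ppyr d H) 1 := by
    filter_upwards [eventually_gt_atTop 0] with n hn
    exact isPreconnected_Ioi.constant hcont (mem_Ioi.2 (Nat.cast_pos.2 hn)) (mem_Ioi.2 one_pos)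
  have hKP := isCompact_ppyr hKc
  have hHP := isCompact_ppyr hHc
  exact (measureReal_eq_measureReal_iff hKP.measure_lt_top.ne hHP.measure_lt_top.ne).1
    (volume_real_eq_of_ehrhart_sub_eq hd
      hKP.isBounded hKP.measurableSet ((convex_ppyr hKconv).addHaar_frontier volume)
      hHP.isBounded hHP.measurableSet ((convex_ppyr hHconv).addHaar_frontier volume) hconst)

end Pseudopyramid

theorem volume_ppyr_eq_of_ehrhart_eq
    (d : ℕ) (K H : Set (EuclideanSpace ℝ (Fin d)))
    (hKc : IsCompact K) (hKconv : Convex ℝ K) (hKint : (interior K).Nonempty)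
    (hHc : IsCompact H) (hHconv : Convex ℝ H) (hHint : (interior H).Nonempty)
    (h : ∀ s : ℝ, 0 < s → ehrhart d K s = ehrhart d H s) :
    volume (ppyr d K) = volume (ppyr d H) :=
  volume_ppyr_eq_of_ehrhart_eq_general hKc hKconv hHc hHconv h
end

section
/- Let v be a unit vector in ℝ^d and let K ⊆ ℝ^d be a convex body. Then lim_{μ → ∞} μ^{d−1} · area(S(K + μv)) = V_K(v), where area denotes (d−1)-dimensional Hausdorff measure. -/
open Set MeasureTheory Filter
open scoped Pointwise Topology RealInnerProductSpace

/-- Spherical projection: `S(A) = {x/‖x‖ : x ∈ A, x ≠ 0}`. -/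
noncomputable def sphProj (d : ℕ) (A : Set (EuclideanSpace ℝ (Fin d))) :
    Set (EuclideanSpace ℝ (Fin d)) :=
  (fun x => ‖x‖⁻¹ • x) '' (A \ {0})

/-- `V_K(v)`: the `(d-1)`-dimensional Hausdorff measure of the orthogonal projection of `K`
onto the hyperplane `{v}ᗮ`. -/
noncomputable def projVol (d : ℕ) (K : Set (EuclideanSpace ℝ (Fin d)))
    (v : EuclideanSpace ℝ (Fin d)) : ℝ :=
  (μH[(d : ℝ) - 1] ((fun x => x - ⟪x, v⟫ • v) '' K)).toReal

/-!
Seen from the origin, `K + μ • v` lies near the direction `v`. There the inverse of the gnomonic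
chart, `y ↦ (v + y) / ‖v + y‖` on the hyperplane `(ℝ ∙ v)ᗮ`, is strictly differentiable at `0` with
an isometric derivative, so it distorts the Hausdorff measure of sets shrinking to `0` by a factor
tending to `1`. The gnomonic image `G μ` of `K + μ • v` is convex, because central projections map
segments to segments, and the dilates `μ • G μ` converge to the orthogonal projection of `K` in
Hausdorff distance. Volume is continuous along such a convergence of convex sets, and
`μ • G μ` has volume `μ ^ (d - 1)` times that of `G μ`.
-/

open Metric Bornology
open Module (finrank)
open scoped ENNReal NNReal

section HausdorffDistance

variable {X : Type*} [PseudoEMetricSpace X]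

theorem subset_thickening_of_hausdorffEDist_lt {s t : Set X} {ε : ℝ}
    (h : hausdorffEDist s t < ENNReal.ofReal ε) : s ⊆ thickening ε t := fun _ hx =>
  (infEDist_le_hausdorffEDist_of_mem hx).trans_lt h

theorem tendsto_hausdorffEDist_image_of_tendstoUniformlyOn {α ι : Type*} {l : Filter ι}
    {f : ι → α → X} {g : α → X} {s : Set α} (h : TendstoUniformlyOn f g l s) :
    Tendsto (fun i => hausdorffEDist (f i '' s) (g '' s)) l (𝓝 0) := by
  refine ENNReal.tendsto_nhds_zero.2 fun ε hε => ?_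
  filter_upwards [EMetric.tendstoUniformlyOn_iff.1 h ε hε] with i hi
  refine hausdorffEDist_le_of_mem_edist ?_ ?_ <;> rintro _ ⟨x, hx, rfl⟩
  · exact ⟨g x, mem_image_of_mem g hx, edist_comm (g x) (f i x) ▸ (hi x hx).le⟩
  · exact ⟨f i x, mem_image_of_mem (f i) hx, (hi x hx).le⟩

variable {ι : Type*} {l : Filter ι} {A : ι → Set X} {C : Set X}

theorem eventually_subset_cthickening_of_tendsto_hausdorffEDist
    (hA : Tendsto (fun i => hausdorffEDist (A i) C) l (𝓝 0)) {ε : ℝ} (hε : 0 < ε) :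
    ∀ᶠ i in l, closure (A i) ⊆ cthickening ε C := by
  filter_upwards [hA.eventually_lt_const (ENNReal.ofReal_pos.2 hε)] with i hi
  exact closure_minimal ((subset_thickening_of_hausdorffEDist_lt hi).trans
    (thickening_subset_cthickening ε C)) isClosed_cthickening

theorem eventually_notMem_closure_of_tendsto_hausdorffEDist
    (hA : Tendsto (fun i => hausdorffEDist (A i) C) l (𝓝 0)) {x : X} (hx : x ∉ closure C) :
    ∀ᶠ i in l, x ∉ closure (A i) := by
  obtain ⟨ε, hε, hxε⟩ := exists_real_pos_lt_infEDist_of_notMem_closure hx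
  filter_upwards [eventually_subset_cthickening_of_tendsto_hausdorffEDist hA hε] with i hi hxi
  exact hxε.not_ge (hi hxi)

end HausdorffDistance

section ConvexVolume

variable {E : Type*} [NormedAddCommGroup E] [NormedSpace ℝ E]

theorem subset_closure_of_add_subset_add_right {A B C : Set E} (hC : Convex ℝ C)
    (hB : IsBounded B) (hB₀ : B.Nonempty) (h : A + B ⊆ C + B) : A ⊆ closure C := by
  intro a ha
  by_contra haC
  obtain ⟨f, u, hau, huC⟩ := geometric_hahn_banach_point_closed hC.closure isClosed_closure haC
  have hbdd : BddBelow (f '' B) := (f.lipschitz.isBounded_image hB).bddBelow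
  have hshift : ∀ b ∈ B, sInf (f '' B) + (u - f a) ≤ f b := fun b hb => by
    obtain ⟨c, hc, b', hb', hcb⟩ := h (add_mem_add ha hb)
    have hf : f c + f b' = f a + f b := by simpa only [map_add] using congrArg f hcb
    have := huC c (subset_closure hc)
    have := csInf_le hbdd (mem_image_of_mem f hb')
    linarith
  have := le_csInf (hB₀.image f) (forall_mem_image.2 hshift)
  linarith

variable {ι : Type*} {l : Filter ι} {A : ι → Set E} {C : Set E}

theorem eventually_mem_closure_of_tendsto_hausdorffEDist (hAconv : ∀ᶠ i in l, Convex ℝ (A i))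
    (hA : Tendsto (fun i => hausdorffEDist (A i) C) l (𝓝 0)) {x : E} (hx : x ∈ interior C) :
    ∀ᶠ i in l, x ∈ closure (A i) := by
  obtain ⟨ε, hε, hball⟩ := Metric.isOpen_iff.1 isOpen_interior x hx
  filter_upwards [hAconv, hA.eventually_lt_const (ENNReal.ofReal_pos.2 hε)] with i hconv hi
  rw [hausdorffEDist_comm] at hi
  rw [← singleton_subset_iff]
  -- A ball around `x` lies in `C`, hence in `A i + ball 0 ε`; cancel the ball from both sides.
  refine subset_closure_of_add_subset_add_right (B := ball 0 ε) hconv isBounded_ball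
    (nonempty_ball.2 hε) ?_
  calc {x} + ball 0 ε = ball x ε := by rw [singleton_add_ball, add_zero]
    _ ⊆ thickening ε (A i) :=
      (hball.trans interior_subset).trans (subset_thickening_of_hausdorffEDist_lt hi)
    _ = A i + ball 0 ε := (add_ball_zero ..).symm

variable [FiniteDimensional ℝ E] [MeasurableSpace E] [BorelSpace E] (ν : Measure E)
  [ν.IsAddHaarMeasure]

theorem measure_closure_of_convex (hC : Convex ℝ C) : ν (closure C) = ν C :=
  measure_congr (closure_ae_eq_of_null_frontier (hC.addHaar_frontier ν))

theorem tendsto_measure_of_tendsto_hausdorffEDist [l.IsCountablyGenerated]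
    (hAconv : ∀ᶠ i in l, Convex ℝ (A i)) (hCconv : Convex ℝ C) (hC : IsBounded C)
    (hA : Tendsto (fun i => hausdorffEDist (A i) C) l (𝓝 0)) :
    Tendsto (fun i => ν (A i)) l (𝓝 (ν C)) := by
  have hclosure : Tendsto (fun i => ν (closure (A i))) l (𝓝 (ν (closure C))) := by
    refine tendsto_measure_of_ae_tendsto_indicator l isClosed_closure.measurableSet
      (fun _ => isClosed_closure.measurableSet) isClosed_cthickening.measurableSet
      hC.cthickening.measure_lt_top.ne
      (eventually_subset_cthickening_of_tendsto_hausdorffEDist hA one_pos) ?_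
    filter_upwards [measure_eq_zero_iff_ae_notMem.1 (hCconv.addHaar_frontier ν)] with x hx
    by_cases hxC : x ∈ closure C
    · have hxint : x ∈ interior C := by_contra fun h => hx ⟨hxC, h⟩
      filter_upwards [eventually_mem_closure_of_tendsto_hausdorffEDist hAconv hA hxint] with i hi
      exact iff_of_true hi hxC
    · filter_upwards [eventually_notMem_closure_of_tendsto_hausdorffEDist hA hxC] with i hi
      exact iff_of_false hi hxC
  rw [measure_closure_of_convex ν hCconv] at hclosure
  refine hclosure.congr' ?_
  filter_upwards [hAconv] with i hi using measure_closure_of_convex ν hi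

end ConvexVolume

section NearIsometry

theorem tendsto_of_eventually_le_mul {ι κ : Type*} {l : Filter ι} {m : Filter κ} [m.NeBot]
    {u w : ι → ℝ≥0∞} {c : κ → ℝ≥0∞} {x : ℝ≥0∞} (hu : Tendsto u l (𝓝 x)) (hc : Tendsto c m (𝓝 1))
    (h : ∀ᶠ k in m, ∀ᶠ i in l, w i ≤ c k * u i ∧ u i ≤ c k * w i) :
    Tendsto w l (𝓝 x) := by
  have hmul (y : ℝ≥0∞) : Tendsto (fun k => c k * y) m (𝓝 y) := by
    simpa only [one_mul] using ENNReal.Tendsto.mul_const hc (Or.inl one_ne_zero)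
  refine tendsto_order.2 ⟨fun y hy => ?_, fun y hy => ?_⟩
  · obtain ⟨k, hk, hky⟩ := (h.and ((hmul y).eventually_lt_const hy)).exists
    filter_upwards [hk, hu.eventually_const_lt hky] with i hi hui
    exact lt_of_mul_lt_mul_left' (hui.trans_le hi.2)
  · obtain ⟨k, hk, hkx, hk_lt_top⟩ := (h.and (((hmul x).eventually_lt_const hy).and
      (hc.eventually_lt_const ENNReal.one_lt_top))).exists
    have hcu : Tendsto (fun i => c k * u i) l (𝓝 (c k * x)) :=
      ENNReal.Tendsto.const_mul hu (Or.inr hk_lt_top.ne)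
    filter_upwards [hk, hcu.eventually_lt_const hkx] with i hi hui using hi.1.trans_lt hui

theorem hausdorffMeasure_le_of_antilipschitzWith_domRestrict {X Y : Type*}
    [EMetricSpace X] [MeasurableSpace X] [BorelSpace X]
    [EMetricSpace Y] [MeasurableSpace Y] [BorelSpace Y] {K : ℝ≥0} {f : X → Y} {s : Set X}
    (hf : AntilipschitzWith K (s.domRestrict f)) {d : ℝ} (hd : 0 ≤ d) :
    μH[d] s ≤ (K : ℝ≥0∞) ^ d * μH[d] (f '' s) := by
  have h := hf.le_hausdorffMeasure_image hd univ
  rwa [← isometry_subtype_coe.hausdorffMeasure_image (Or.inl hd), image_univ, image_univ,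
    Subtype.range_coe, range_domRestrict] at h

variable {E F : Type*} [NormedAddCommGroup E] [NormedSpace ℝ E]
  [NormedAddCommGroup F] [NormedSpace ℝ F] {f : E → F} {L : E →ₗᵢ[ℝ] F} {a : E}

theorem eventually_smallSets_lipschitzOnWith_antilipschitzWith
    (hf : HasStrictFDerivAt f L.toContinuousLinearMap a) {t : ℝ≥0} (ht : 1 < t) :
    ∀ᶠ s in (𝓝 a).smallSets, LipschitzOnWith t f s ∧ AntilipschitzWith t (s.domRestrict f) := by
  have ht₀ : (0 : ℝ) < t := zero_lt_one.trans (NNReal.coe_lt_coe.2 ht)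
  have ht₁ : (0 : ℝ) < 1 - (t : ℝ)⁻¹ := sub_pos.2 (inv_lt_one_of_one_lt₀ (NNReal.coe_lt_coe.2 ht))
  obtain ⟨s, hs, hfs⟩ := hf.approximates_deriv_on_nhds (c := ⟨1 - (t : ℝ)⁻¹, ht₁.le⟩) (Or.inr ht₁)
  have hdist : ∀ x ∈ s, ∀ y ∈ s,
      |dist (f x) (f y) - dist x y| ≤ (1 - (t : ℝ)⁻¹) * dist x y := fun x hx y hy => by
    calc |dist (f x) (f y) - dist x y| = |‖f x - f y‖ - ‖L (x - y)‖| := by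
          rw [L.norm_map, dist_eq_norm, dist_eq_norm]
      _ ≤ ‖f x - f y - L (x - y)‖ := abs_norm_sub_norm_le _ _
      _ ≤ (1 - (t : ℝ)⁻¹) * dist x y := dist_eq_norm x y ▸ hfs x hx y hy
  have htt : 2 ≤ t + (t : ℝ)⁻¹ := by
    have : (t : ℝ) * (t : ℝ)⁻¹ = 1 := mul_inv_cancel₀ ht₀.ne'
    nlinarith [sq_nonneg ((t : ℝ) - 1), inv_pos.2 ht₀]
  refine eventually_smallSets.2 ⟨s, hs, fun u hu => ⟨?_, ?_⟩⟩
  · refine LipschitzOnWith.of_dist_le_mul fun x hx y hy => ?_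
    have := (abs_le.1 (hdist x (hu hx) y (hu hy))).2
    nlinarith [dist_nonneg (x := x) (y := y)]
  · refine AntilipschitzWith.of_le_mul_dist fun x y => ?_
    have := (abs_le.1 (hdist x (hu x.2) y (hu y.2))).1
    rw [← div_le_iff₀' ht₀, div_eq_inv_mul]
    change _ ≤ dist (f x) (f y)
    rw [Subtype.dist_eq]
    linarith

theorem tendsto_mul_hausdorffMeasure_image [MeasurableSpace E] [BorelSpace E]
    [MeasurableSpace F] [BorelSpace F] (hf : HasStrictFDerivAt f L.toContinuousLinearMap a)
    {d : ℝ} (hd : 0 ≤ d) {ι : Type*} {l : Filter ι} {s : ι → Set E} {c : ι → ℝ≥0∞} {x : ℝ≥0∞}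
    (hs : Tendsto s l (𝓝 a).smallSets) (hx : Tendsto (fun i => c i * μH[d] (s i)) l (𝓝 x)) :
    Tendsto (fun i => c i * μH[d] (f '' s i)) l (𝓝 x) := by
  have hrpow : Tendsto (fun t : ℝ≥0 => (t : ℝ≥0∞) ^ d) (𝓝[>] 1) (𝓝 1) := by
    have h := (ENNReal.continuous_rpow_const (y := d)).comp ENNReal.continuous_coe
    simpa only [Function.comp_def, ENNReal.coe_one, ENNReal.one_rpow] using
      (h.tendsto 1).mono_left nhdsWithin_le_nhds
  refine tendsto_of_eventually_le_mul hx hrpow ?_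
  filter_upwards [self_mem_nhdsWithin] with t ht
  filter_upwards [hs.eventually (eventually_smallSets_lipschitzOnWith_antilipschitzWith hf ht)]
    with i ⟨hlip, hanti⟩
  rw [mul_left_comm _ (c i), mul_left_comm _ (c i)]
  exact ⟨by gcongr; exact hlip.hausdorffMeasure_image_le hd,
    by gcongr; exact hausdorffMeasure_le_of_antilipschitzWith_domRestrict hanti hd⟩

end NearIsometry

theorem convex_image_inv_smul {𝕜 E F : Type*} [Field 𝕜] [LinearOrder 𝕜] [IsStrictOrderedRing 𝕜]
    [AddCommGroup E] [Module 𝕜 E] [AddCommGroup F] [Module 𝕜 F] {s : Set E} (hs : Convex 𝕜 s)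
    {ℓ : E →ₗ[𝕜] 𝕜} (hℓ : ∀ x ∈ s, 0 < ℓ x) (L : E →ₗ[𝕜] F) :
    Convex 𝕜 ((fun x => (ℓ x)⁻¹ • L x) '' s) := by
  rintro _ ⟨x, hx, rfl⟩ _ ⟨y, hy, rfl⟩ a b ha hb hab
  have hx₀ := (hℓ x hx).ne'
  have hy₀ := (hℓ y hy).ne'
  -- The weights `p`, `q` make `ℓ (p • x + q • y) = 1`, so dividing by `p + q` gives the preimage.
  obtain ⟨p, hp, rfl⟩ : ∃ p, 0 ≤ p ∧ p * ℓ x = a :=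
    ⟨a / ℓ x, div_nonneg ha (hℓ x hx).le, div_mul_cancel₀ a hx₀⟩
  obtain ⟨q, hq, rfl⟩ : ∃ q, 0 ≤ q ∧ q * ℓ y = b :=
    ⟨b / ℓ y, div_nonneg hb (hℓ y hy).le, div_mul_cancel₀ b hy₀⟩
  have hpq : p + q ≠ 0 := fun h => by
    obtain ⟨rfl, rfl⟩ := (add_eq_zero_iff_of_nonneg hp hq).1 h
    simp only [zero_mul, add_zero, zero_ne_one] at hab
  have hℓz : ℓ ((p / (p + q)) • x + (q / (p + q)) • y) = (p + q)⁻¹ := by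
    rw [map_add, map_smul, map_smul, smul_eq_mul, smul_eq_mul, div_mul_eq_mul_div,
      div_mul_eq_mul_div, ← add_div, hab, one_div]
  refine ⟨(p / (p + q)) • x + (q / (p + q)) • y, hs hx hy (by positivity) (by positivity)
    (by rw [← add_div, div_self hpq]), ?_⟩
  dsimp only
  rw [hℓz, inv_inv, map_add, map_smul, map_smul, smul_add, smul_smul, smul_smul,
    mul_div_cancel₀ _ hpq, mul_div_cancel₀ _ hpq, mul_smul, mul_smul, smul_inv_smul₀ hx₀,
    smul_inv_smul₀ hy₀]

section Gnomonic

variable {E : Type*} [NormedAddCommGroup E] [InnerProductSpace ℝ E]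

theorem hasStrictFDerivAt_normalize {x : E} (hx : x ≠ 0) :
    HasStrictFDerivAt NormedSpace.normalize (‖x‖⁻¹ • (ℝ ∙ x)ᗮ.starProjection) x := by
  have hx₀ : ‖x‖ ≠ 0 := norm_ne_zero_iff.2 hx
  have hnorm : HasStrictFDerivAt (‖·‖) (‖x‖⁻¹ • innerSL ℝ x) x := by
    have h := (hasStrictFDerivAt_norm_sq x).sqrt (pow_ne_zero 2 hx₀)
    simp only [Real.sqrt_sq (norm_nonneg _)] at h
    refine h.congr_fderiv ?_
    ext y
    simp only [one_div, smul_apply, coe_innerSL_apply, nsmul_eq_mul, Nat.cast_ofNat, smul_eq_mul]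
    field_simp
  have h := ((hasStrictDerivAt_inv hx₀).comp_hasStrictFDerivAt x hnorm).smul
    (hasStrictFDerivAt_id x)
  refine h.congr_fderiv ?_
  ext y
  simp only [Function.comp_apply, neg_smul, id_eq, add_apply, sub_apply, neg_apply, smul_apply,
    ContinuousLinearMap.id_apply, ContinuousLinearMap.smulRight_apply, coe_innerSL_apply,
    smul_eq_mul, Submodule.starProjection_orthogonal, Submodule.starProjection_singleton,
    Real.ringHom_apply]
  module

/-- The gnomonic (central) projection from the origin onto the affine hyperplane `v + (ℝ ∙ v)ᗮ`,
for a unit vector `v`. The image point is recorded by its difference from `v`, an element of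
`(ℝ ∙ v)ᗮ`; it is `0` when `⟪v, x⟫ = 0`. -/
noncomputable def gnomonicProj (v x : E) : (ℝ ∙ v)ᗮ :=
  ⟪v, x⟫⁻¹ • (ℝ ∙ v)ᗮ.orthogonalProjectionOnto x

variable {K : Set E} {v x : E}

theorem coe_orthogonalProjectionOnto_orthogonal_singleton (hv : ‖v‖ = 1) (x : E) :
    ((ℝ ∙ v)ᗮ.orthogonalProjectionOnto x : E) = x - ⟪v, x⟫ • v := by
  rw [← Submodule.starProjection_apply, Submodule.starProjection_orthogonal_val,
    Submodule.starProjection_unit_singleton ℝ hv]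

theorem normalize_add_gnomonicProj (hv : ‖v‖ = 1) (hx : 0 < ⟪v, x⟫) :
    NormedSpace.normalize (v + gnomonicProj v x) = NormedSpace.normalize x := by
  have hsmul : v + gnomonicProj v x = ⟪v, x⟫⁻¹ • x := by
    rw [gnomonicProj, Submodule.coe_smul, coe_orthogonalProjectionOnto_orthogonal_singleton hv,
      smul_sub, inv_smul_smul₀ hx.ne', add_sub_cancel]
  rw [hsmul, NormedSpace.normalize_smul_of_pos (inv_pos.2 hx)]

theorem convex_image_gnomonicProj (hK : Convex ℝ K) (hK₀ : ∀ x ∈ K, 0 < ⟪v, x⟫) :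
    Convex ℝ (gnomonicProj v '' K) :=
  convex_image_inv_smul hK (ℓ := innerₗ E v) hK₀ (ℝ ∙ v)ᗮ.orthogonalProjectionOnto.toLinearMap

theorem hasStrictFDerivAt_normalize_add (hv : ‖v‖ = 1) :
    HasStrictFDerivAt (fun y : (ℝ ∙ v)ᗮ => NormedSpace.normalize (v + y))
      (ℝ ∙ v)ᗮ.subtypeₗᵢ.toContinuousLinearMap 0 := by
  have hnormalize : HasStrictFDerivAt NormedSpace.normalize (ℝ ∙ v)ᗮ.starProjection
      (v + (ℝ ∙ v)ᗮ.subtypeL 0) := by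
    have h := hasStrictFDerivAt_normalize (norm_ne_zero_iff.1 (hv ▸ one_ne_zero))
    rw [hv, inv_one, one_smul] at h
    rwa [map_zero, add_zero]
  refine HasStrictFDerivAt.congr_fderiv
    (hnormalize.comp 0 ((ℝ ∙ v)ᗮ.subtypeL.hasStrictFDerivAt.const_add v)) ?_
  ext y
  exact Submodule.starProjection_mem_subspace_eq_self y

theorem inner_add_smul_self (hv : ‖v‖ = 1) (x : E) (μ : ℝ) : ⟪v, x + μ • v⟫ = ⟪v, x⟫ + μ := by
  rw [inner_add_right, real_inner_smul_right, real_inner_self_eq_norm_sq, hv, one_pow, mul_one]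

theorem gnomonicProj_add_smul_self (hv : ‖v‖ = 1) (x : E) (μ : ℝ) :
    gnomonicProj v (x + μ • v) = (⟪v, x⟫ + μ)⁻¹ • (ℝ ∙ v)ᗮ.orthogonalProjectionOnto x := by
  rw [gnomonicProj, inner_add_smul_self hv, map_add, map_smul,
    Submodule.orthogonalProjectionOnto_orthogonalComplement_singleton_eq_zero, smul_zero, add_zero]

theorem eventually_forall_lt_inner_add_smul_self (hv : ‖v‖ = 1) (hK : IsBounded K) (c : ℝ) :
    ∀ᶠ μ : ℝ in atTop, ∀ x ∈ K, c < ⟪v, x + μ • v⟫ := by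
  obtain ⟨R, hR⟩ := hK.exists_norm_le
  filter_upwards [eventually_gt_atTop (c + R)] with μ hμ x hx
  have hvx : |⟪v, x⟫| ≤ ‖x‖ := by simpa only [hv, one_mul] using abs_real_inner_le_norm v x
  linarith [inner_add_smul_self hv x μ, (abs_le.1 hvx).1, hR x hx]

theorem tendstoUniformlyOn_gnomonicProj_add_smul (hv : ‖v‖ = 1) (hK : IsBounded K) :
    TendstoUniformlyOn (fun (μ : ℝ) x => gnomonicProj v (x + μ • v)) 0 atTop K := by
  obtain ⟨R, hR₀, hR⟩ := hK.exists_pos_norm_le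
  refine Metric.tendstoUniformlyOn_iff.2 fun ε hε => ?_
  filter_upwards [eventually_forall_lt_inner_add_smul_self hv hK (R / ε)] with μ hμ x hx
  have hpos : 0 < ⟪v, x⟫ + μ := inner_add_smul_self hv x μ ▸ (div_pos hR₀ hε).trans (hμ x hx)
  have hlt : R < ε * (⟪v, x⟫ + μ) := inner_add_smul_self hv x μ ▸ (div_lt_iff₀' hε).1 (hμ x hx)
  have hproj : ‖(ℝ ∙ v)ᗮ.orthogonalProjectionOnto x‖ ≤ ‖x‖ :=
    (ℝ ∙ v)ᗮ.norm_starProjection_apply_le x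
  rw [Pi.zero_apply, dist_zero_left, gnomonicProj_add_smul_self hv, norm_smul, norm_inv,
    Real.norm_of_nonneg hpos.le, inv_mul_lt_iff₀ hpos, mul_comm]
  exact (hproj.trans (hR x hx)).trans_lt hlt

theorem tendstoUniformlyOn_smul_gnomonicProj_add_smul (hv : ‖v‖ = 1) (hK : IsBounded K) :
    TendstoUniformlyOn (fun (μ : ℝ) x => μ • gnomonicProj v (x + μ • v))
      (ℝ ∙ v)ᗮ.orthogonalProjectionOnto atTop K := by
  obtain ⟨R, hR₀, hR⟩ := hK.exists_pos_norm_le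
  refine Metric.tendstoUniformlyOn_iff.2 fun ε hε => ?_
  filter_upwards [eventually_forall_lt_inner_add_smul_self hv hK 0, Metric.tendstoUniformlyOn_iff.1
    (tendstoUniformlyOn_gnomonicProj_add_smul hv hK) (ε / R) (by positivity)] with μ hpos hμ x hx
  have hdiff : (ℝ ∙ v)ᗮ.orthogonalProjectionOnto x - μ • gnomonicProj v (x + μ • v) =
      ⟪v, x⟫ • gnomonicProj v (x + μ • v) := by
    have hne : ⟪v, x⟫ + μ ≠ 0 := inner_add_smul_self hv x μ ▸ (hpos x hx).ne'
    rw [sub_eq_iff_eq_add, ← add_smul, gnomonicProj_add_smul_self hv, smul_inv_smul₀ hne]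
  have hvx : ‖⟪v, x⟫‖ ≤ ‖x‖ := by simpa only [hv, one_mul] using norm_inner_le_norm v x
  have hsmall : ‖gnomonicProj v (x + μ • v)‖ < ε / R := by
    simpa only [Pi.zero_apply, dist_zero_left] using hμ x hx
  rw [dist_eq_norm, hdiff, norm_smul]
  calc ‖⟪v, x⟫‖ * ‖gnomonicProj v (x + μ • v)‖ ≤ R * ‖gnomonicProj v (x + μ • v)‖ := by
        gcongr
        exact hvx.trans (hR x hx)
    _ < ε := (lt_div_iff₀' hR₀).1 hsmall

theorem tendsto_image_gnomonicProj_add_smul (hv : ‖v‖ = 1) (hK : IsBounded K) :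
    Tendsto (fun μ : ℝ => gnomonicProj v '' ((fun x => x + μ • v) '' K)) atTop
      (𝓝 0).smallSets := by
  refine tendsto_smallSets_iff.2 fun t ht => ?_
  obtain ⟨ε, hε, hball⟩ := Metric.mem_nhds_iff.1 ht
  filter_upwards [Metric.tendstoUniformlyOn_iff.1
    (tendstoUniformlyOn_gnomonicProj_add_smul hv hK) ε hε] with μ hμ
  rintro _ ⟨_, ⟨x, hx, rfl⟩, rfl⟩
  exact hball (mem_ball'.2 (hμ x hx))

theorem eventually_image_normalize_add_gnomonicProj (hv : ‖v‖ = 1) (hK : IsBounded K) :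
    ∀ᶠ μ : ℝ in atTop, (fun y : (ℝ ∙ v)ᗮ => NormedSpace.normalize (v + y)) ''
        (gnomonicProj v '' ((fun x => x + μ • v) '' K)) =
      NormedSpace.normalize '' (((fun x => x + μ • v) '' K) \ {0}) := by
  filter_upwards [eventually_forall_lt_inner_add_smul_self hv hK 0] with μ hμ
  have hpos : ∀ x ∈ (fun x => x + μ • v) '' K, 0 < ⟪v, x⟫ := forall_mem_image.2 hμ
  have hzero : (0 : E) ∉ (fun x => x + μ • v) '' K := fun h =>
    (hpos 0 h).ne' (inner_zero_right v)
  rw [sdiff_singleton_eq_self hzero, image_image]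
  exact image_congr fun x hx => normalize_add_gnomonicProj hv (hpos x hx)

variable [FiniteDimensional ℝ E] [MeasurableSpace E] [BorelSpace E]

theorem tendsto_mul_measure_gnomonicProj_image (hv : ‖v‖ = 1) (hKconv : Convex ℝ K)
    (hK : IsBounded K) (ν : Measure (ℝ ∙ v)ᗮ) [ν.IsAddHaarMeasure] :
    Tendsto (fun μ : ℝ => ENNReal.ofReal (μ ^ finrank ℝ (ℝ ∙ v)ᗮ) *
        ν (gnomonicProj v '' ((fun x => x + μ • v) '' K)))
      atTop (𝓝 (ν ((ℝ ∙ v)ᗮ.orthogonalProjectionOnto '' K))) := by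
  have hbdd : IsBounded ((ℝ ∙ v)ᗮ.orthogonalProjectionOnto '' K) :=
    (ℝ ∙ v)ᗮ.orthogonalProjectionOnto.lipschitz.isBounded_image hK
  have hconv : ∀ᶠ μ : ℝ in atTop,
      Convex ℝ ((fun x => μ • gnomonicProj v (x + μ • v)) '' K) := by
    filter_upwards [eventually_forall_lt_inner_add_smul_self hv hK 0] with μ hμ
    have hshift : Convex ℝ ((fun x => x + μ • v) '' K) := by
      simpa only [add_comm] using hKconv.translate (μ • v)
    have h := (convex_image_gnomonicProj hshift (forall_mem_image.2 hμ)).smul μ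
    rwa [← image_smul, image_image, image_image] at h
  refine (tendsto_measure_of_tendsto_hausdorffEDist ν hconv (hKconv.linear_image _) hbdd
    (tendsto_hausdorffEDist_image_of_tendstoUniformlyOn
      (tendstoUniformlyOn_smul_gnomonicProj_add_smul hv hK))).congr' ?_
  filter_upwards [eventually_ge_atTop 0] with μ hμ
  rw [← Measure.addHaar_smul_of_nonneg ν hμ, ← image_smul, image_image, image_image]

theorem tendsto_mul_hausdorffMeasure_normalize_image (hv : ‖v‖ = 1) (hKconv : Convex ℝ K)
    (hK : IsBounded K) :
    Tendsto (fun μ : ℝ => ENNReal.ofReal (μ ^ finrank ℝ (ℝ ∙ v)ᗮ) *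
        μH[finrank ℝ (ℝ ∙ v)ᗮ] (NormedSpace.normalize '' (((fun x => x + μ • v) '' K) \ {0})))
      atTop (𝓝 (μH[finrank ℝ (ℝ ∙ v)ᗮ] ((ℝ ∙ v)ᗮ.orthogonalProjectionOnto '' K))) := by
  refine (tendsto_mul_hausdorffMeasure_image (hasStrictFDerivAt_normalize_add hv)
    (Nat.cast_nonneg _) (tendsto_image_gnomonicProj_add_smul hv hK)
    (tendsto_mul_measure_gnomonicProj_image hv hKconv hK _)).congr' ?_
  filter_upwards [eventually_image_normalize_add_gnomonicProj hv hK] with μ hμ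
  rw [hμ]

end Gnomonic

theorem tendsto_area_sphProj_translate_general {E : Type*} [NormedAddCommGroup E]
    [InnerProductSpace ℝ E] [FiniteDimensional ℝ E] [MeasurableSpace E] [BorelSpace E]
    {K : Set E} {v : E} (hv : ‖v‖ = 1) (hKconv : Convex ℝ K) (hK : IsBounded K) :
    Tendsto
      (fun μ : ℝ => μ ^ (finrank ℝ E - 1) * (μH[(finrank ℝ E : ℝ) - 1]
        (NormedSpace.normalize '' (((fun x => x + μ • v) '' K) \ {0}))).toReal)
      atTop (𝓝 (μH[(finrank ℝ E : ℝ) - 1] ((fun x => x - ⟪x, v⟫ • v) '' K)).toReal) := by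
  have hrank : finrank ℝ E = finrank ℝ (ℝ ∙ v)ᗮ + 1 := by
    rw [← (ℝ ∙ v).finrank_add_finrank_orthogonal, add_comm,
      finrank_span_singleton (norm_ne_zero_iff.1 (hv ▸ one_ne_zero))]
  have hproj : μH[finrank ℝ (ℝ ∙ v)ᗮ] ((fun x => x - ⟪x, v⟫ • v) '' K) =
      μH[finrank ℝ (ℝ ∙ v)ᗮ] ((ℝ ∙ v)ᗮ.orthogonalProjectionOnto '' K) := by
    rw [← (ℝ ∙ v)ᗮ.subtypeₗᵢ.isometry.hausdorffMeasure_image (Or.inl (Nat.cast_nonneg _)),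
      image_image]
    simp only [Submodule.coe_subtypeₗᵢ, Submodule.subtype_apply,
      coe_orthogonalProjectionOnto_orthogonal_singleton hv, real_inner_comm]
  have hfinite : μH[finrank ℝ (ℝ ∙ v)ᗮ] ((ℝ ∙ v)ᗮ.orthogonalProjectionOnto '' K) ≠ ∞ :=
    ((ℝ ∙ v)ᗮ.orthogonalProjectionOnto.lipschitz.isBounded_image hK).measure_lt_top.ne
  rw [hrank, Nat.cast_succ, add_sub_cancel_right, Nat.add_sub_cancel, hproj]
  refine ((ENNReal.tendsto_toReal hfinite).comp
    (tendsto_mul_hausdorffMeasure_normalize_image hv hKconv hK)).congr' ?_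
  filter_upwards [eventually_ge_atTop 0] with μ hμ
  rw [Function.comp_apply, ENNReal.toReal_mul, ENNReal.toReal_ofReal (pow_nonneg hμ _)]

theorem tendsto_area_sphProj_translate
    (d : ℕ) (K : Set (EuclideanSpace ℝ (Fin d))) (v : EuclideanSpace ℝ (Fin d))
    (hv : ‖v‖ = 1)
    (hKc : IsCompact K) (hKconv : Convex ℝ K) (hKint : (interior K).Nonempty) :
    Tendsto
      (fun μ : ℝ =>
        μ ^ (d - 1) * (μH[(d : ℝ) - 1] (sphProj d ((fun x => x + μ • v) '' K))).toReal)
      atTop (𝓝 (projVol d K v)) := by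
  simpa only [finrank_euclideanSpace_fin] using!
    tendsto_area_sphProj_translate_general hv hKconv hKc.isBounded
end
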